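/- Let n ≥ 1 be an integer and C₁ > 0, C₂ ≥ 1 be real numbers. Let x : ℕ → ℕ satisfy, for every integer y ≥ 2: 1 ≤ x(y), x(y) ≤ C₂·y^(1/n), and x(y) ≤ y/2. Let R : ℕ → ℝ satisfy R(1) ≥ C₁ and, for every integer y ≥ 2, R(y) ≥ R(y − x(y)) + C₁·√(x(y)). Then for every integer y ≥ 1, R(y) ≥ (C₁/(2·√C₂))·y^(1 − 1/(2n)). -/

import Mathlib

/-!
Consider steps from `y` of length `x ≤ C₂ y ^ β` that raise `R` by `C₁ x ^ α`; square-root tail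
regret is `α = 1 / 2`. Put `b = β (1 - α)`. Between `y` and `y - x` the profile `y ^ (1 - b)` drops
by at most `x / y ^ b`, and `x ≤ C₂ y ^ β` gives `x / y ^ b ≤ C₂ ^ (1 - α) x ^ α`. So
`C₁ / C₂ ^ (1 - α) * y ^ (1 - b)` never drops by more than `R` does, and `R` stays above it.
-/

theorem le_of_sub_le_sub_descent {G : Type*} [AddCommGroup G] [Preorder G] [IsOrderedAddMonoid G]
    {f g : ℕ → G} {pred : ℕ → ℕ} (h_one : f 1 ≤ g 1)
    (one_le_pred : ∀ y, 2 ≤ y → 1 ≤ pred y) (pred_lt : ∀ y, 2 ≤ y → pred y < y)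
    (h_drop : ∀ y, 2 ≤ y → f y - f (pred y) ≤ g y - g (pred y)) :
    ∀ y, 1 ≤ y → f y ≤ g y := by
  intro y hy
  induction y using Nat.strong_induction_on with
  | _ y ih =>
    obtain rfl | hy₂ : 1 = y ∨ 2 ≤ y := hy.eq_or_lt
    · exact h_one
    · have h_pred : f (pred y) ≤ g (pred y) := ih _ (pred_lt y hy₂) (one_le_pred y hy₂)
      simpa only [sub_add_cancel] using add_le_add (h_drop y hy₂) h_pred

theorem rpow_one_sub_sub_rpow_one_sub_le {x y b : ℝ} (hx : 0 ≤ x) (hxy : x < y) (hb : 0 ≤ b) :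
    y ^ (1 - b) - (y - x) ^ (1 - b) ≤ x / y ^ b := by
  have hz : 0 < y - x := sub_pos.mpr hxy
  have hy : 0 < y := hx.trans_lt hxy
  have h_rpow : (y - x) ^ b ≤ y ^ b := Real.rpow_le_rpow hz.le (sub_le_self y hx) hb
  calc y ^ (1 - b) - (y - x) ^ (1 - b)
      = y / y ^ b - (y - x) / (y - x) ^ b := by
        rw [Real.rpow_sub hy, Real.rpow_sub hz, Real.rpow_one, Real.rpow_one]
    _ ≤ y / y ^ b - (y - x) / y ^ b := by gcongr
    _ = x / y ^ b := by ring

theorem div_rpow_le_of_le_mul_rpow {x y C α β : ℝ} (hx : 0 ≤ x) (hy : 0 < y) (hC : 0 ≤ C)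
    (hα : α ≤ 1) (hxy : x ≤ C * y ^ β) :
    x / y ^ (β * (1 - α)) ≤ C ^ (1 - α) * x ^ α := by
  rw [div_le_iff₀ (Real.rpow_pos_of_pos hy _)]
  calc x = x ^ (1 - α) * x ^ α := by
        rw [← Real.rpow_add' hx (by simp), sub_add_cancel, Real.rpow_one]
    _ ≤ (C * y ^ β) ^ (1 - α) * x ^ α := by gcongr
    _ = C ^ (1 - α) * x ^ α * y ^ (β * (1 - α)) := by
        rw [Real.mul_rpow hC (Real.rpow_nonneg hy.le _), ← Real.rpow_mul hy.le]
        ring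

theorem lookback_lower_bound_general {α β C₁ C₂ : ℝ} (hα : α ≤ 1) (hβ : 0 ≤ β)
    (hC₁ : 0 ≤ C₁) (hC₂ : 1 ≤ C₂) {x : ℕ → ℕ}
    (one_le_x : ∀ y, 2 ≤ y → 1 ≤ x y) (x_lt : ∀ y, 2 ≤ y → x y < y)
    (x_le : ∀ y : ℕ, 2 ≤ y → (x y : ℝ) ≤ C₂ * (y : ℝ) ^ β)
    {R : ℕ → ℝ} (hR₁ : C₁ ≤ R 1)
    (hR : ∀ y, 2 ≤ y → R (y - x y) + C₁ * (x y : ℝ) ^ α ≤ R y) :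
    ∀ y : ℕ, 1 ≤ y → C₁ / C₂ ^ (1 - α) * (y : ℝ) ^ (1 - β * (1 - α)) ≤ R y := by
  have hα' : 0 ≤ 1 - α := sub_nonneg.mpr hα
  have hC₂' : 1 ≤ C₂ ^ (1 - α) := Real.one_le_rpow hC₂ hα'
  have hC₂_pos : 0 < C₂ ^ (1 - α) := one_pos.trans_le hC₂'
  refine le_of_sub_le_sub_descent (pred := fun y ↦ y - x y) ?_
    (fun y hy ↦ Nat.sub_pos_of_lt (x_lt y hy))
    (fun y hy ↦ Nat.sub_lt (by lia) (one_le_x y hy)) fun y hy ↦ ?_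
  · simpa using (div_le_self hC₁ hC₂').trans hR₁
  · have h_lt : (x y : ℝ) < y := by exact_mod_cast x_lt y hy
    rw [Nat.cast_sub (x_lt y hy).le, ← mul_sub]
    calc C₁ / C₂ ^ (1 - α) *
          ((y : ℝ) ^ (1 - β * (1 - α)) - ((y : ℝ) - x y) ^ (1 - β * (1 - α)))
        ≤ C₁ / C₂ ^ (1 - α) * ((x y : ℝ) / (y : ℝ) ^ (β * (1 - α))) := by
          gcongr
          exact rpow_one_sub_sub_rpow_one_sub_le (x y).cast_nonneg h_lt (mul_nonneg hβ hα')
      _ ≤ C₁ / C₂ ^ (1 - α) * (C₂ ^ (1 - α) * (x y : ℝ) ^ α) := by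
          gcongr
          exact div_rpow_le_of_le_mul_rpow (x y).cast_nonneg ((x y).cast_nonneg.trans_lt h_lt)
            (zero_le_one.trans hC₂) hα (x_le y hy)
      _ = C₁ * (x y : ℝ) ^ α := by rw [← mul_assoc, div_mul_cancel₀ _ hC₂_pos.ne']
      _ ≤ R y - R (y - x y) := le_sub_iff_add_le'.mpr (hR y hy)

/-- Proposition 5.1 of the paper (discretized): in the history-lookback
technique, sub-polynomially short tails force a nearly linear regret bound. -/
theorem lookback_lower_bound (n : ℕ) (hn : 1 ≤ n) (C₁ C₂ : ℝ)
    (hC₁ : 0 < C₁) (hC₂ : 1 ≤ C₂)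
    (x : ℕ → ℕ)
    (hx₁ : ∀ y : ℕ, 2 ≤ y → 1 ≤ x y)
    (hx₂ : ∀ y : ℕ, 2 ≤ y → (x y : ℝ) ≤ C₂ * (y : ℝ) ^ (1 / (n : ℝ)))
    (hx₃ : ∀ y : ℕ, 2 ≤ y → (x y : ℝ) ≤ (y : ℝ) / 2)
    (R : ℕ → ℝ)
    (hR₁ : C₁ ≤ R 1)
    (hRrec : ∀ y : ℕ, 2 ≤ y → R (y - x y) + C₁ * Real.sqrt (x y) ≤ R y) :
    ∀ y : ℕ, 1 ≤ y →
      C₁ / (2 * Real.sqrt C₂) * (y : ℝ) ^ (1 - 1 / (2 * (n : ℝ))) ≤ R y := by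
  intro y hy
  have x_lt (y : ℕ) (hy : 2 ≤ y) : x y < y := by
    exact_mod_cast (hx₃ y hy).trans_lt (half_lt_self (by positivity : (0 : ℝ) < y))
  simp only [Real.sqrt_eq_rpow] at hRrec ⊢
  calc C₁ / (2 * C₂ ^ (1 / 2 : ℝ)) * (y : ℝ) ^ (1 - 1 / (2 * (n : ℝ)))
      ≤ C₁ / C₂ ^ (1 / 2 : ℝ) * (y : ℝ) ^ (1 - 1 / (2 * (n : ℝ))) := by
        gcongr
        exact le_mul_of_one_le_left (by positivity) one_le_two
    _ = C₁ / C₂ ^ (1 - 1 / 2 : ℝ) * (y : ℝ) ^ (1 - 1 / (n : ℝ) * (1 - 1 / 2)) := by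
        ring_nf
    _ ≤ R y := lookback_lower_bound_general (by norm_num) (by positivity) hC₁.le hC₂
        hx₁ x_lt hx₂ hR₁ hRrec y hy
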